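/- Let n be odd, ω a modulus of continuity, p integrable and positive a.e. on [a,b], and x ∈ [a,b] with ∫_a^b r_x^n(t) dt = 0. Then sup over g ∈ H^ω[a,b] of |∫_a^b r_x^n(t) g(t) dt| ≤ ∫_a^x |r_x^n(t)| ω(ρ(t) − t) dt, where ρ : [a,x] → [x,b] is uniquely determined by ∫_a^t r_x^n(s) ds = ∫_a^{ρ(t)} r_x^n(s) ds; moreover, if ω is concave, equality holds. -/

import Mathlib

/-!
Write `r = r_x^n` and `F t = ∫_a^t r`. Since `n` is odd, an induction on the kernels gives `r < 0`
a.e. on `(a, x)` and `r > 0` a.e. on `(x, b)`, so `F` decreases strictly on `[a, x]` and increases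
strictly on `[x, b]` with `F a = F b = 0`. Hence `ρ` is a decreasing bijection `[a, x] → [x, b]`
(`rho_props`), and it pushes the measure `-r dt` on `[a, x]` forward to `r dv` on `[x, b]`
(`integral_comp_rho`). Therefore
`∫_a^b r g = ∫_a^x |r t| (g (ρ t) - g t) dt`,
and `|g (ρ t) - g t| ≤ ω (ρ t - t)` gives the bound.

For concave `ω` the bound is attained by a function `g ∈ H^ω` with `g (ρ t) - g t = ω (ρ t - t)`
(`exists_extremal`). On `[a, x]` it is `G u = ∫_a^u ω'(ρ s - s) ds`, with `ω'` the left derivative,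
and on `[x, b]` it is defined by the required identity. Monotonicity of `ρ` and of `ω'` gives, for
`t ≤ t'`,
`ω (ρ t - t) - ω (ρ t - t') ≤ G t' - G t ≤ ω (ρ t' - t) - ω (ρ t' - t')`
(`exists_potential`); membership in `H^ω` follows from these two inequalities together with the
monotonicity and subadditivity of `ω`, without differentiating `ρ`.
-/

open MeasureTheory intervalIntegral

/-- The kernels `r_x^k`: `r_x^0 = p` and
`r_x^{k+1}(s) = −∫_a^s r_x^k` for `s ≤ x`, `∫_s^b r_x^k` for `s ≥ x`. -/
noncomputable def rk (a b x : ℝ) (p : ℝ → ℝ) : ℕ → ℝ → ℝ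
  | 0 => p
  | k + 1 => fun s =>
      if s ≤ x then -(∫ t in a..s, rk a b x p k t)
      else ∫ t in s..b, rk a b x p k t

/-! ### Signs and integrability of the kernels -/

lemma integral_pos_of_ae_pos {f : ℝ → ℝ} {c d : ℝ} (hcd : c < d)
    (hf : IntervalIntegrable f volume c d)
    (hpos : ∀ᵐ t, t ∈ Set.Ioc c d → 0 < f t) : 0 < ∫ t in c..d, f t := by
  rw [integral_of_le hcd.le]
  have hpos' : ∀ᵐ t ∂(volume.restrict (Set.Ioc c d)), 0 < f t :=
    (ae_restrict_iff' measurableSet_Ioc).2 hpos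
  have h0 : 0 ≤ᵐ[volume.restrict (Set.Ioc c d)] f := hpos'.mono fun t ht => ht.le
  refine (integral_pos_iff_support_of_nonneg_ae h0 hf.1).2 ?_
  have h1 : (Set.univ : Set ℝ) ≤ᵐ[volume.restrict (Set.Ioc c d)] Function.support f :=
    hpos'.mono fun t ht _ => ht.ne'
  refine lt_of_lt_of_le ?_ (measure_mono_ae h1)
  simpa using hcd

lemma rk_props {a b x : ℝ} {p : ℝ → ℝ} (hx : x ∈ Set.Icc a b)
    (hp : IntervalIntegrable p volume a b)
    (hppos : ∀ᵐ t ∂(volume.restrict (Set.Icc a b)), 0 < p t) (k : ℕ) :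
    IntervalIntegrable (rk a b x p k) volume a b ∧
    (∀ᵐ t, t ∈ Set.Ioc a x → 0 < (-1 : ℝ) ^ k * rk a b x p k t) ∧
    (∀ᵐ t, t ∈ Set.Ioc x b → 0 < rk a b x p k t) := by
  have hab : a ≤ b := hx.1.trans hx.2
  have hb0 : ∀ᵐ t : ℝ, t ≠ b := by simp [ae_iff]
  induction k with
  | zero =>
    have h := (ae_restrict_iff' measurableSet_Icc).1 hppos
    refine ⟨hp, ?_, ?_⟩
    · filter_upwards [h] with t ht h'
      simpa [rk] using ht ⟨h'.1.le, h'.2.trans hx.2⟩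
    · filter_upwards [h] with t ht h'
      exact ht ⟨hx.1.trans h'.1.le, h'.2⟩
  | succ k ih =>
    obtain ⟨hi, hl, hr⟩ := ih
    have hsub : ∀ {c d : ℝ}, a ≤ c → c ≤ d → d ≤ b →
        IntervalIntegrable (rk a b x p k) volume c d := fun {c d} h1 h2 h3 =>
      hi.mono_set (by rw [Set.uIcc_of_le h2, Set.uIcc_of_le hab]; exact Set.Icc_subset_Icc h1 h3)
    have hc1 : ContinuousOn (fun s => -(∫ t in a..s, rk a b x p k t)) (Set.Icc a b) := by
      have := continuousOn_primitive_interval (f := rk a b x p k) (μ := volume) (a := a) (b := b)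
        (by rw [Set.uIcc_of_le hab]; exact (intervalIntegrable_iff_integrableOn_Icc_of_le hab).1 hi)
      rw [Set.uIcc_of_le hab] at this
      exact this.neg
    have hc2 : ContinuousOn (fun s => ∫ t in s..b, rk a b x p k t) (Set.Icc a b) := by
      refine (hc1.add (continuousOn_const (c := ∫ t in a..b, rk a b x p k t))).congr ?_
      intro s hs
      have := integral_add_adjacent_intervals (hsub le_rfl hs.1 hs.2) (hsub hs.1 hs.2 le_rfl)
      simp only [Pi.add_apply]
      linarith
    refine ⟨?_, ?_, ?_⟩
    · have i1 : IntervalIntegrable (rk a b x p (k + 1)) volume a x := by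
        have : IntervalIntegrable (fun s => -(∫ t in a..s, rk a b x p k t)) volume a x :=
          (hc1.mono (by rw [Set.uIcc_of_le hx.1]
                        exact Set.Icc_subset_Icc_right hx.2)).intervalIntegrable
        refine this.congr ?_
        intro s hs
        rw [Set.uIoc_of_le hx.1] at hs
        simp [rk, hs.2]
      have i2 : IntervalIntegrable (rk a b x p (k + 1)) volume x b := by
        have : IntervalIntegrable (fun s => ∫ t in s..b, rk a b x p k t) volume x b :=
          (hc2.mono (by rw [Set.uIcc_of_le hx.2]
                        exact Set.Icc_subset_Icc_left hx.1)).intervalIntegrable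
        refine this.congr ?_
        intro s hs
        rw [Set.uIoc_of_le hx.2] at hs
        simp [rk, not_le.2 hs.1]
      exact i1.trans i2
    · refine Filter.Eventually.of_forall fun s hs => ?_
      have h := integral_pos_of_ae_pos hs.1
        ((hsub le_rfl hs.1.le (hs.2.trans hx.2)).const_mul ((-1 : ℝ) ^ k))
        (hl.mono fun t ht h' => ht ⟨h'.1, h'.2.trans hs.2⟩)
      rw [intervalIntegral.integral_const_mul] at h
      simp only [rk, hs.2, if_true]
      rw [pow_succ]
      linarith
    · filter_upwards [hb0] with s hsb hs
      simp only [rk, not_le.2 hs.1, if_false]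
      exact integral_pos_of_ae_pos (lt_of_le_of_ne hs.2 hsb)
        (hsub (hx.1.trans hs.1.le) hs.2 le_rfl)
        (hr.mono fun t ht hst => ht ⟨hs.1.trans hst.1, hst.2⟩)

/-! ### The change of variables `ρ` -/

/-- For a kernel that is negative on `(a, x)` and positive on `(x, b)` with total integral zero,
the map `ρ` matching equal values of the primitive is a decreasing bijection
`[a, x] → [x, b]`. -/
lemma rho_props {a b x : ℝ} {r ρ : ℝ → ℝ} (hx : x ∈ Set.Icc a b)
    (hi : IntervalIntegrable r volume a b)
    (hl : ∀ᵐ t, t ∈ Set.Ioc a x → 0 < - r t)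
    (hr : ∀ᵐ t, t ∈ Set.Ioc x b → 0 < r t)
    (hzero : (∫ t in a..b, r t) = 0)
    (hρ : ∀ t ∈ Set.Icc a x, ρ t ∈ Set.Icc x b ∧
      (∫ s in a..t, r s) = ∫ s in a..(ρ t), r s) :
    StrictAntiOn ρ (Set.Icc a x) ∧ Set.SurjOn ρ (Set.Icc a x) (Set.Icc x b) := by
  have hab : a ≤ b := hx.1.trans hx.2
  have hsub : ∀ {c d : ℝ}, a ≤ c → c ≤ d → d ≤ b →
      IntervalIntegrable r volume c d := fun {c d} h1 h2 h3 =>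
    hi.mono_set (by rw [Set.uIcc_of_le h2, Set.uIcc_of_le hab]; exact Set.Icc_subset_Icc h1 h3)
  set F : ℝ → ℝ := fun t => ∫ s in a..t, r s with hF
  have hadd : ∀ {c d : ℝ}, a ≤ c → c ≤ d → d ≤ b → F d - F c = ∫ s in c..d, r s := by
    intro c d h1 h2 h3
    have := integral_add_adjacent_intervals (hsub le_rfl h1 (h2.trans h3)) (hsub h1 h2 h3)
    simp only [hF]
    linarith
  have hcont : ContinuousOn F (Set.Icc a b) := by
    have := continuousOn_primitive_interval (f := r) (μ := volume) (a := a) (b := b)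
      (by rw [Set.uIcc_of_le hab]; exact (intervalIntegrable_iff_integrableOn_Icc_of_le hab).1 hi)
    rwa [Set.uIcc_of_le hab] at this
  have hanti : StrictAntiOn F (Set.Icc a x) := by
    intro s hs t ht hst
    have h := integral_pos_of_ae_pos hst (hsub hs.1 hst.le (ht.2.trans hx.2)).neg
      (hl.mono fun u hu h' => hu ⟨hs.1.trans_lt h'.1, h'.2.trans ht.2⟩)
    simp only [Pi.neg_apply] at h
    rw [intervalIntegral.integral_neg, ← hadd hs.1 hst.le (ht.2.trans hx.2)] at h
    linarith
  have hmono : StrictMonoOn F (Set.Icc x b) := by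
    intro s hs t ht hst
    have h := integral_pos_of_ae_pos hst (hsub (hx.1.trans hs.1) hst.le ht.2)
      (hr.mono fun u hu h' => hu ⟨hs.1.trans_lt h'.1, h'.2.trans ht.2⟩)
    rw [← hadd (hx.1.trans hs.1) hst.le ht.2] at h
    linarith
  have hFa : F a = 0 := by simp [hF]
  have hFb : F b = 0 := hzero
  refine ⟨?_, ?_⟩
  · intro s hs t ht hst
    have h := hanti hs ht hst
    have e1 : F s = F (ρ s) := (hρ s hs).2
    have e2 : F t = F (ρ t) := (hρ t ht).2
    rw [e1, e2] at h
    exact (hmono.lt_iff_lt (hρ t ht).1 (hρ s hs).1).1 h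
  · intro v hv
    have h1 : F v ∈ Set.Icc (F x) (F a) := by
      refine ⟨hmono.monotoneOn ⟨le_rfl, hx.2⟩ hv hv.1, ?_⟩
      rw [hFa, ← hFb]
      exact hmono.monotoneOn hv ⟨hx.2, le_rfl⟩ hv.2
    obtain ⟨t, ht, htv⟩ :=
      intermediate_value_Icc' hx.1 (hcont.mono (Set.Icc_subset_Icc_right hx.2)) h1
    refine ⟨t, ht, hmono.injOn (hρ t ht).1 hv ?_⟩
    rw [← htv]
    exact (hρ t ht).2.symm

/-- The substitution `v = ρ t`: the measure `-r dt` on `[a, x]` is pushed forward by `ρ` to the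
measure `r dv` on `[x, b]`, since both give the same mass to every half-line. -/
lemma integral_comp_rho {a b x : ℝ} {r ρ : ℝ → ℝ} (hx : x ∈ Set.Icc a b)
    (hi : IntervalIntegrable r volume a b)
    (hl : ∀ᵐ t, t ∈ Set.Ioc a x → 0 < - r t)
    (hr : ∀ᵐ t, t ∈ Set.Ioc x b → 0 < r t)
    (hzero : (∫ t in a..b, r t) = 0)
    (hρ : ∀ t ∈ Set.Icc a x, ρ t ∈ Set.Icc x b ∧
      (∫ s in a..t, r s) = ∫ s in a..(ρ t), r s)
    (φ : ℝ → ℝ) (hφ : ContinuousOn φ (Set.Icc a b)) :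
    (∫ v in x..b, r v * φ v) = ∫ t in a..x, (-r t) * φ (ρ t) := by
  have hab : a ≤ b := hx.1.trans hx.2
  obtain ⟨hanti, hsurj⟩ := rho_props hx hi hl hr hzero hρ
  have hsub : ∀ {c d : ℝ}, a ≤ c → c ≤ d → d ≤ b →
      IntervalIntegrable r volume c d := fun {c d} h1 h2 h3 =>
    hi.mono_set (by rw [Set.uIcc_of_le h2, Set.uIcc_of_le hab]; exact Set.Icc_subset_Icc h1 h3)
  have hsubI : ∀ {c d : ℝ}, a ≤ c → c ≤ d → d ≤ b → IntegrableOn r (Set.Icc c d) :=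
    fun h1 h2 h3 => (intervalIntegrable_iff_integrableOn_Icc_of_le h2).1 (hsub h1 h2 h3)
  have ha0 : ∀ᵐ t : ℝ, t ≠ a := by simp [ae_iff]
  have hx0 : ∀ᵐ t : ℝ, t ≠ x := by simp [ae_iff]
  -- masses of subintervals under the two weights
  have m1 : ∀ τ ∈ Set.Icc a x, ∫⁻ t in Set.Icc a τ, ENNReal.ofReal (-r t)
      = ENNReal.ofReal (-∫ t in a..τ, r t) := by
    intro τ hτ
    rw [← ofReal_integral_eq_lintegral_ofReal (f := fun t => -r t)
        (hsubI le_rfl hτ.1 (hτ.2.trans hx.2)).neg,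
      ← intervalIntegral.integral_neg, integral_of_le hτ.1, integral_Icc_eq_integral_Ioc]
    refine (ae_restrict_iff' measurableSet_Icc).2 ?_
    filter_upwards [hl, ha0] with t h1 h2 h3
    exact (h1 ⟨lt_of_le_of_ne h3.1 (Ne.symm h2), h3.2.trans hτ.2⟩).le
  have m2 : ∀ v ∈ Set.Icc x b, ∫⁻ t in Set.Icc v b, ENNReal.ofReal (r t)
      = ENNReal.ofReal (∫ t in v..b, r t) := by
    intro v hv
    rw [← ofReal_integral_eq_lintegral_ofReal (hsubI (hx.1.trans hv.1) hv.2 le_rfl),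
      integral_of_le hv.2, integral_Icc_eq_integral_Ioc]
    refine (ae_restrict_iff' measurableSet_Icc).2 ?_
    filter_upwards [hr, hx0] with t h1 h2 h3
    exact (h1 ⟨lt_of_le_of_ne (hv.1.trans h3.1) (Ne.symm h2), h3.2⟩).le
  have hrl : AEMeasurable (fun t => ENNReal.ofReal (-r t)) (volume.restrict (Set.Icc a x)) :=
    (hsubI le_rfl hx.1 hx.2).neg.aestronglyMeasurable.aemeasurable.ennreal_ofReal
  have hrr : AEMeasurable (fun t => ENNReal.ofReal (r t)) (volume.restrict (Set.Icc x b)) :=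
    (hsubI hx.1 hx.2 le_rfl).aestronglyMeasurable.aemeasurable.ennreal_ofReal
  set μ := (volume.restrict (Set.Icc a x)).withDensity (fun t => ENNReal.ofReal (-r t)) with hμ
  set ν := (volume.restrict (Set.Icc x b)).withDensity (fun t => ENNReal.ofReal (r t)) with hν
  have hρm : AEMeasurable ρ μ :=
    (aemeasurable_restrict_of_antitoneOn measurableSet_Icc hanti.antitoneOn).mono_ac
      (withDensity_absolutelyContinuous _ _)
  have hfin : IsFiniteMeasure μ := by
    refine isFiniteMeasure_withDensity ?_
    rw [m1 x ⟨hx.1, le_rfl⟩]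
    exact ENNReal.ofReal_ne_top
  have hmap : Measure.map ρ μ = ν := by
    have := Measure.isFiniteMeasure_map μ ρ
    refine Measure.ext_of_Ici _ _ fun c => ?_
    rw [Measure.map_apply_of_aemeasurable hρm measurableSet_Ici, hμ, hν, withDensity_apply',
      withDensity_apply', Measure.restrict_restrict' measurableSet_Icc,
      Measure.restrict_restrict' measurableSet_Icc]
    rcases lt_or_ge b c with hc | hc
    · have e1 : ρ ⁻¹' Set.Ici c ∩ Set.Icc a x = ∅ := by
        ext t
        simp only [Set.mem_inter_iff, Set.mem_preimage, Set.mem_Ici, Set.mem_empty_iff_false,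
          iff_false, not_and]
        intro h1 h2
        linarith [(hρ t h2).1.2]
      have e2 : Set.Ici c ∩ Set.Icc x b = ∅ := by
        ext t
        simp only [Set.mem_inter_iff, Set.mem_Ici, Set.mem_empty_iff_false,
          iff_false, not_and]
        intro h1 h2
        linarith [h2.2]
      rw [e1, e2]
      simp
    · have hv : max c x ∈ Set.Icc x b := ⟨le_max_right _ _, max_le hc hx.2⟩
      obtain ⟨τ, hτ, hτv⟩ := hsurj hv
      have e1 : ρ ⁻¹' Set.Ici c ∩ Set.Icc a x = Set.Icc a τ := by
        ext t
        simp only [Set.mem_inter_iff, Set.mem_preimage, Set.mem_Ici]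
        constructor
        · rintro ⟨h1, h2⟩
          refine ⟨h2.1, (hanti.le_iff_ge hτ h2).1 ?_⟩
          rw [hτv]
          exact max_le h1 (hρ t h2).1.1
        · intro h
          have h2 : t ∈ Set.Icc a x := ⟨h.1, h.2.trans hτ.2⟩
          have := (hanti.le_iff_ge hτ h2).2 h.2
          rw [hτv] at this
          exact ⟨(le_max_left _ _).trans this, h2⟩
      have e2 : Set.Ici c ∩ Set.Icc x b = Set.Icc (max c x) b := by
        ext t
        simp only [Set.mem_inter_iff, Set.mem_Ici, Set.mem_Icc, max_le_iff]
        tauto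
      rw [e1, e2, m1 τ hτ, m2 _ hv]
      congr 1
      have := integral_add_adjacent_intervals (hsub le_rfl (hx.1.trans hv.1) hv.2)
        (hsub (hx.1.trans hv.1) hv.2 le_rfl)
      have h3 := (hρ τ hτ).2
      rw [hτv] at h3
      linarith
  have hφν : AEStronglyMeasurable φ ν :=
    ((hφ.mono (Set.Icc_subset_Icc_left hx.1)).aestronglyMeasurable
      measurableSet_Icc).mono_ac (withDensity_absolutelyContinuous _ _)
  have key : ∫ v, φ v ∂ν = ∫ t, φ (ρ t) ∂μ := by
    rw [← hmap] at hφν ⊢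
    exact MeasureTheory.integral_map hρm hφν
  rw [hμ, hν, integral_withDensity_eq_integral_toReal_smul₀ hrr (by simp),
    integral_withDensity_eq_integral_toReal_smul₀ hrl (by simp)] at key
  rw [integral_of_le hx.1, integral_of_le hx.2, ← integral_Icc_eq_integral_Ioc,
    ← integral_Icc_eq_integral_Ioc]
  have k1 : ∫ v in Set.Icc x b, r v * φ v
      = ∫ v in Set.Icc x b, (ENNReal.ofReal (r v)).toReal • φ v := by
    refine integral_congr_ae ((ae_restrict_iff' measurableSet_Icc).2 ?_)
    filter_upwards [hr, hx0] with t h1 h2 h3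
    rw [ENNReal.toReal_ofReal (h1 ⟨lt_of_le_of_ne h3.1 (Ne.symm h2), h3.2⟩).le, smul_eq_mul]
  have k2 : ∫ t in Set.Icc a x, (-r t) * φ (ρ t)
      = ∫ t in Set.Icc a x, (ENNReal.ofReal (-r t)).toReal • φ (ρ t) := by
    refine integral_congr_ae ((ae_restrict_iff' measurableSet_Icc).2 ?_)
    filter_upwards [hl, ha0] with t h1 h2 h3
    rw [ENNReal.toReal_ofReal (h1 ⟨lt_of_le_of_ne h3.1 (Ne.symm h2), h3.2⟩).le, smul_eq_mul]
  rw [k1, k2, key]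

/-! ### The extremal function for concave `ω` -/

/-- The extremal function on `[a, x]` is `G u = ∫_a^u ω'(ρ s - s) ds` with `ω'` the left
derivative. As `ρ` is decreasing and `ω'` is decreasing, freezing `ρ` at either end of `[t, t']`
bounds the increment of `G` by differences of `ω`; `ω'` may be unbounded near `0`, but
`ω'(ρ s - s) ≤ ω'(x - s)` and the latter is integrable. -/
lemma exists_potential {a x : ℝ} {ω ρ : ℝ → ℝ} (hωc : Continuous ω)
    (hωm : MonotoneOn ω (Set.Ici 0)) (hconc : ConcaveOn ℝ (Set.Ici 0) ω)
    (hanti : AntitoneOn ρ (Set.Icc a x)) (hρx : ∀ t ∈ Set.Icc a x, x ≤ ρ t) :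
    ∃ G : ℝ → ℝ, ∀ t ∈ Set.Icc a x, ∀ t' ∈ Set.Icc a x, t ≤ t' →
      ω (ρ t - t) - ω (ρ t - t') ≤ G t' - G t ∧
      G t' - G t ≤ ω (ρ t' - t) - ω (ρ t' - t') := by
  have hconv : ConvexOn ℝ (Set.Ici 0) (-ω) := hconc.neg
  set L : ℝ → ℝ := fun s => -derivWithin (-ω) (Set.Iio s) s with hL
  have hint : ∀ {s : ℝ}, 0 < s → s ∈ interior (Set.Ici (0 : ℝ)) := fun h => by
    rw [interior_Ici]; exact h
  have hLanti : ∀ {s t : ℝ}, 0 < s → s ≤ t → L t ≤ L s := fun {s t} hs hst =>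
    neg_le_neg (hconv.monotoneOn_leftDeriv (hint hs) (hint (hs.trans_le hst)) hst)
  have hL0 : ∀ {s : ℝ}, 0 < s → 0 ≤ L s := by
    intro s hs
    simp only [hL, neg_nonneg]
    rw [hconv.leftDeriv_eq_sSup_slope_of_mem_interior (hint hs)]
    refine Real.sSup_nonpos ?_
    rintro _ ⟨y, ⟨hy, hys⟩, rfl⟩
    have h := hωm hy (show (0:ℝ) ≤ s from hs.le) hys.le
    rw [slope_def_field]
    refine div_nonpos_of_nonneg_of_nonpos ?_ (by linarith)
    simp only [Pi.neg_apply]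
    linarith
  have hder : ∀ {v s : ℝ}, s < v →
      HasDerivWithinAt (fun s => -ω (v - s)) (L (v - s)) (Set.Ioi s) s := by
    intro v s hsv
    have h1 := hconv.hasDerivWithinAt_leftDeriv_of_mem_interior (hint (sub_pos.2 hsv))
    have h2 : HasDerivWithinAt (fun s : ℝ => v - s) (-1) (Set.Ioi s) s :=
      ((hasDerivAt_id s).const_sub v).hasDerivWithinAt
    have h3 := h1.comp s h2 (fun u hu => by
      simp only [Set.mem_Iio, Set.mem_Ioi] at hu ⊢; linarith)
    simpa [hL, Function.comp_def] using h3
  have hcont : ∀ v : ℝ, Continuous fun s => -ω (v - s) := fun v =>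
    (hωc.comp (continuous_const.sub continuous_id)).neg
  set h : ℝ → ℝ := fun s => L (ρ s - s) with hh
  have hIco : ∀ {s : ℝ}, s ∈ Set.Ico a x → 0 < ρ s - s := fun {s} hs => by
    linarith [hρx s ⟨hs.1, hs.2.le⟩, hs.2]
  have hhmono : MonotoneOn h (Set.Ico a x) := by
    intro s hs t ht hst
    refine hLanti (hIco ht) ?_
    linarith [hanti ⟨hs.1, hs.2.le⟩ ⟨ht.1, ht.2.le⟩ hst]
  have hdom : IntegrableOn (fun s => L (x - s)) (Set.Ico a x) := by
    have := integrableOn_deriv_right_of_nonneg (a := a) (b := x) (hcont x).continuousOn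
      (fun s hs => hder hs.2) (fun s hs => hL0 (sub_pos.2 hs.2))
    rw [integrableOn_Ico_iff_integrableOn_Ioo]
    rwa [integrableOn_Ioc_iff_integrableOn_Ioo] at this
  have hhint : IntegrableOn h (Set.Icc a x) := by
    rw [integrableOn_Icc_iff_integrableOn_Ico]
    refine hdom.mono'
      (aemeasurable_restrict_of_monotoneOn measurableSet_Ico hhmono).aestronglyMeasurable ?_
    refine (ae_restrict_iff' measurableSet_Ico).2 (Filter.Eventually.of_forall fun s hs => ?_)
    rw [Real.norm_of_nonneg (hL0 (hIco hs))]
    exact hLanti (sub_pos.2 hs.2) (by linarith [hρx s ⟨hs.1, hs.2.le⟩])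
  refine ⟨fun u => ∫ s in a..u, h s, fun t ht t' ht' htt => ?_⟩
  have hsubI : ∀ {c d : ℝ}, a ≤ c → c ≤ d → d ≤ x → IntegrableOn h (Set.Icc c d) :=
    fun h1 h2 h3 => hhint.mono_set (Set.Icc_subset_Icc h1 h3)
  have hsub : ∀ {c d : ℝ}, a ≤ c → c ≤ d → d ≤ x → IntervalIntegrable h volume c d :=
    fun h1 h2 h3 => (intervalIntegrable_iff_integrableOn_Icc_of_le h2).2 (hsubI h1 h2 h3)
  have hadd := integral_add_adjacent_intervals (hsub le_rfl ht.1 ht.2) (hsub ht.1 htt ht'.2)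
  have hmem : ∀ {s : ℝ}, s ∈ Set.Ioo t t' → s ∈ Set.Ico a x := fun hs =>
    ⟨ht.1.trans hs.1.le, hs.2.trans_le ht'.2⟩
  have low := sub_le_integral_of_hasDeriv_right_of_le htt (hcont (ρ t)).continuousOn
    (fun s hs => hder (lt_of_lt_of_le (hmem hs).2 (hρx t ht))) (hsubI ht.1 htt ht'.2)
    (fun s hs => hLanti (hIco (hmem hs)) (by
      linarith [hanti ht ⟨(hmem hs).1, (hmem hs).2.le⟩ hs.1.le]))
  have upp := integral_le_sub_of_hasDeriv_right_of_le htt (hcont (ρ t')).continuousOn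
    (fun s hs => hder (lt_of_lt_of_le (hmem hs).2 (hρx t' ht'))) (hsubI ht.1 htt ht'.2)
    (fun s hs => hLanti (sub_pos.2 (lt_of_lt_of_le (hmem hs).2 (hρx t' ht'))) (by
      linarith [hanti ⟨(hmem hs).1, (hmem hs).2.le⟩ ht' hs.2.le]))
  constructor <;> linarith

/-- For concave `ω` and a decreasing bijection `ρ : [a, x] → [x, b]` there is a function in
`H^ω` whose increments between `t` and `ρ t` are as large as possible for every `t < x`. -/
lemma exists_extremal {a b x : ℝ} {ω ρ : ℝ → ℝ} (hx : x ∈ Set.Icc a b) (hωc : Continuous ω)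
    (hωm : MonotoneOn ω (Set.Ici 0)) (hω0 : ω 0 = 0)
    (hωsub : ∀ s t : ℝ, 0 ≤ s → 0 ≤ t → ω (s + t) ≤ ω s + ω t)
    (hconc : ConcaveOn ℝ (Set.Ici 0) ω)
    (hmaps : ∀ t ∈ Set.Icc a x, ρ t ∈ Set.Icc x b)
    (hanti : StrictAntiOn ρ (Set.Icc a x)) (hsurj : Set.SurjOn ρ (Set.Icc a x) (Set.Icc x b)) :
    ∃ g : ℝ → ℝ, (∀ u ∈ Set.Icc a b, ∀ v ∈ Set.Icc a b, |g u - g v| ≤ ω |u - v|) ∧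
      ∀ t ∈ Set.Ico a x, g (ρ t) - g t = ω (ρ t - t) := by
  obtain ⟨G, hG⟩ := exists_potential hωc hωm hconc hanti.antitoneOn
    (fun t ht => (hmaps t ht).1)
  have hsurj' : ∀ v, ∃ t, v ∈ Set.Icc x b → t ∈ Set.Icc a x ∧ ρ t = v := by
    intro v
    by_cases hv : v ∈ Set.Icc x b
    · obtain ⟨t, ht, h⟩ := hsurj hv
      exact ⟨t, fun _ => ⟨ht, h⟩⟩
    · exact ⟨0, fun h => absurd h hv⟩
  choose τ hτ using hsurj'
  have hm : ∀ {s t : ℝ}, 0 ≤ s → s ≤ t → ω s ≤ ω t := fun {s t} hs hst =>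
    hωm hs (show (0:ℝ) ≤ t from hs.trans hst) hst
  have hd : ∀ {s t : ℝ}, 0 ≤ s → s ≤ t → ω t - ω s ≤ ω (t - s) := fun {s t} hs hst => by
    have := hωsub s (t - s) hs (sub_nonneg.2 hst)
    rw [add_sub_cancel] at this
    linarith
  set g : ℝ → ℝ := fun u => if u ≤ x then G u else G (τ u) + ω (u - τ u) with hg
  have main : ∀ u ∈ Set.Icc a b, ∀ v ∈ Set.Icc a b, u ≤ v →
      0 ≤ g v - g u ∧ g v - g u ≤ ω (v - u) := by
    intro u hu v hv huv
    rcases le_or_gt v x with hvx | hvx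
    · have hux := huv.trans hvx
      simp only [hg, hvx, hux, if_true]
      obtain ⟨h1, h2⟩ := hG u ⟨hu.1, hux⟩ v ⟨hv.1, hvx⟩ huv
      have ru := (hmaps u ⟨hu.1, hux⟩).1
      have rv := (hmaps v ⟨hv.1, hvx⟩).1
      have h3 := hm (s := ρ u - v) (t := ρ u - u) (by linarith) (by linarith)
      have h4 := hd (s := ρ v - v) (t := ρ v - u) (by linarith) (by linarith)
      rw [show ρ v - u - (ρ v - v) = v - u by ring] at h4
      constructor <;> linarith
    obtain ⟨ht, htv⟩ := hτ v ⟨hvx.le, hv.2⟩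
    rcases le_or_gt u x with hux | hux
    · simp only [hg, not_le.2 hvx, hux, if_true, if_false]
      have hu' : u ∈ Set.Icc a x := ⟨hu.1, hux⟩
      have ru := (hmaps u hu').1
      rcases le_total u (τ v) with hut | hut
      · obtain ⟨h1, h2⟩ := hG u hu' _ ht hut
        rw [htv] at h2
        have h3 := hm (s := ρ u - τ v) (t := ρ u - u) (by linarith [ht.2]) (by linarith)
        have h4 := hm (s := 0) (t := v - τ v) le_rfl (by linarith [ht.2])
        constructor <;> linarith
      · obtain ⟨h1, h2⟩ := hG _ ht u hu' hut
        rw [htv] at h1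
        have h5 := hanti.antitoneOn ht hu' hut
        rw [htv] at h5
        have h3 := hm (s := ρ u - τ v) (t := v - τ v) (by linarith [ht.2]) (by linarith)
        have h4 := hm (s := 0) (t := ρ u - u) le_rfl (by linarith)
        constructor <;> linarith
    · simp only [hg, not_le.2 hvx, not_le.2 hux, if_false]
      obtain ⟨hs, hsu⟩ := hτ u ⟨hux.le, hu.2⟩
      have hts : τ v ≤ τ u := by
        refine (hanti.le_iff_ge hs ht).1 ?_
        rw [hsu, htv]
        exact huv
      obtain ⟨h1, h2⟩ := hG _ ht _ hs hts
      rw [htv] at h1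
      rw [hsu] at h2
      have h3 := hm (s := u - τ v) (t := v - τ v) (by linarith [ht.2]) (by linarith)
      have h4 := hd (s := u - τ u) (t := v - τ u) (by linarith [hs.2]) (by linarith)
      rw [show v - τ u - (u - τ u) = v - u by ring] at h4
      constructor <;> linarith
  refine ⟨g, ?_, ?_⟩
  · intro u hu v hv
    rcases le_total u v with huv | huv
    · obtain ⟨h1, h2⟩ := main u hu v hv huv
      rw [abs_sub_comm, abs_of_nonneg h1, abs_sub_comm, abs_of_nonneg (sub_nonneg.2 huv)]
      exact h2
    · obtain ⟨h1, h2⟩ := main v hv u hu huv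
      rw [abs_of_nonneg h1, abs_of_nonneg (sub_nonneg.2 huv)]
      exact h2
  · intro t ht
    have ht' : t ∈ Set.Icc a x := ⟨ht.1, ht.2.le⟩
    have hlt : x < ρ t := lt_of_le_of_lt (hmaps x ⟨hx.1, le_rfl⟩).1
      (hanti ht' ⟨hx.1, le_rfl⟩ ht.2)
    obtain ⟨h1, h2⟩ := hτ _ (hmaps t ht')
    have h3 : τ (ρ t) = t := hanti.injOn h1 ht' h2
    simp only [hg, not_le.2 hlt, ht.2.le, if_true, if_false, h3]
    ring

lemma continuousOn_of_modulus {a b : ℝ} {ω g : ℝ → ℝ} (hωc : Continuous ω) (hω0 : ω 0 = 0)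
    (hg : ∀ u ∈ Set.Icc a b, ∀ v ∈ Set.Icc a b, |g u - g v| ≤ ω |u - v|) :
    ContinuousOn g (Set.Icc a b) := by
  intro v hv
  refine tendsto_iff_dist_tendsto_zero.2 ?_
  have h : Filter.Tendsto (fun u => ω |u - v|) (nhdsWithin v (Set.Icc a b)) (nhds 0) := by
    have : Continuous fun u => ω |u - v| := by fun_prop
    have h := (this.tendsto v).mono_left (nhdsWithin_le_nhds (s := Set.Icc a b))
    simpa [hω0] using h
  refine squeeze_zero' (Filter.Eventually.of_forall fun _ => dist_nonneg) ?_ h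
  filter_upwards [self_mem_nhdsWithin] with u hu
  exact hg u hu v hv

/-! ### The bound and its sharpness -/

/-- Korneichuk–Stechkin-type bound: for odd `n`, `p` integrable and positive a.e.,
`x ∈ [a,b]` with `∫_a^b r_x^n = 0`, and `ρ : [a,x] → [x,b]` determined by
`∫_a^t r_x^n = ∫_a^{ρ(t)} r_x^n`, one has
`sup_{g ∈ H^ω} |∫_a^b r_x^n g| ≤ ∫_a^x |r_x^n(t)| ω(ρ(t)−t) dt`, with equality
when the modulus of continuity `ω` is concave. -/
theorem stmt14 (a b : ℝ) (hab : a < b) (n : ℕ) (hno : Odd n)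
    (ω : ℝ → ℝ) (hωc : Continuous ω) (hωm : MonotoneOn ω (Set.Ici 0))
    (hω0 : ω 0 = 0)
    (hωsub : ∀ s t : ℝ, 0 ≤ s → 0 ≤ t → ω (s + t) ≤ ω s + ω t)
    (p : ℝ → ℝ) (hp : IntervalIntegrable p volume a b)
    (hppos : ∀ᵐ t ∂(volume.restrict (Set.Icc a b)), 0 < p t)
    (x : ℝ) (hx : x ∈ Set.Icc a b)
    (hzero : (∫ t in a..b, rk a b x p n t) = 0)
    (ρ : ℝ → ℝ)
    (hρ : ∀ t ∈ Set.Icc a x, ρ t ∈ Set.Icc x b ∧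
      (∫ s in a..t, rk a b x p n s) = ∫ s in a..(ρ t), rk a b x p n s) :
    (∀ g : ℝ → ℝ,
        (∀ u ∈ Set.Icc a b, ∀ v ∈ Set.Icc a b, |g u - g v| ≤ ω |u - v|) →
        |∫ t in a..b, rk a b x p n t * g t|
          ≤ ∫ t in a..x, |rk a b x p n t| * ω (ρ t - t)) ∧
    (ConcaveOn ℝ (Set.Ici 0) ω →
      sSup {v : ℝ | ∃ g : ℝ → ℝ,
            (∀ u ∈ Set.Icc a b, ∀ v' ∈ Set.Icc a b, |g u - g v'| ≤ ω |u - v'|) ∧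
            v = |∫ t in a..b, rk a b x p n t * g t|}
        = ∫ t in a..x, |rk a b x p n t| * ω (ρ t - t)) := by
  obtain ⟨hi, hl, hr⟩ := rk_props hx hp hppos n
  set r := rk a b x p n with hrdef
  replace hl : ∀ᵐ t, t ∈ Set.Ioc a x → 0 < -r t := by
    simpa [hno.neg_one_pow] using hl
  obtain ⟨hanti, hsurj⟩ := rho_props hx hi hl hr hzero hρ
  have hi1 : IntervalIntegrable r volume a x := hi.mono_set (by
    rw [Set.uIcc_of_le hx.1, Set.uIcc_of_le hab.le]; exact Set.Icc_subset_Icc_right hx.2)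
  have hi2 : IntervalIntegrable r volume x b := hi.mono_set (by
    rw [Set.uIcc_of_le hx.2, Set.uIcc_of_le hab.le]; exact Set.Icc_subset_Icc_left hx.1)
  have hρm : AEMeasurable ρ (volume.restrict (Set.Ioc a x)) :=
    (aemeasurable_restrict_of_antitoneOn measurableSet_Icc hanti.antitoneOn).mono_set
      Set.Ioc_subset_Icc_self
  have hx0 : ∀ᵐ t : ℝ, t ≠ x := by simp [ae_iff]
  -- the integrand of the bound is integrable, since `0 ≤ ρ t - t ≤ b - a`
  have hB : IntervalIntegrable (fun t => |r t| * ω (ρ t - t)) volume a x := by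
    rw [intervalIntegrable_iff_integrableOn_Ioc_of_le hx.1]
    refine Integrable.mul_bdd (c := ω (b - a)) hi1.1.abs
      (hωc.measurable.comp_aemeasurable (hρm.sub aemeasurable_id)).aestronglyMeasurable ?_
    refine (ae_restrict_iff' measurableSet_Ioc).2 (Filter.Eventually.of_forall fun t ht => ?_)
    have h1 := (hρ t ⟨ht.1.le, ht.2⟩).1
    have h0 : (0:ℝ) ≤ ρ t - t := by linarith [h1.1, ht.2]
    have h2 := hωm Set.self_mem_Ici h0 h0
    rw [Real.norm_of_nonneg (by linarith)]
    exact hωm h0 (show (0:ℝ) ≤ b - a by linarith) (by linarith [h1.2, ht.1])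
  have split : ∀ g : ℝ → ℝ,
      (∀ u ∈ Set.Icc a b, ∀ v ∈ Set.Icc a b, |g u - g v| ≤ ω |u - v|) →
      (∫ t in a..b, r t * g t) = ∫ t in a..x, |r t| * (g (ρ t) - g t) := by
    intro g hg
    have hgc := continuousOn_of_modulus hωc hω0 hg
    have hrg1 : IntervalIntegrable (fun t => r t * g t) volume a x :=
      hi1.mul_continuousOn (hgc.mono (by
        rw [Set.uIcc_of_le hx.1]; exact Set.Icc_subset_Icc_right hx.2))
    have hrg2 : IntervalIntegrable (fun t => r t * g t) volume x b :=
      hi2.mul_continuousOn (hgc.mono (by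
        rw [Set.uIcc_of_le hx.2]; exact Set.Icc_subset_Icc_left hx.1))
    obtain ⟨C, hC⟩ := isCompact_Icc.exists_bound_of_continuousOn hgc
    have hgm : AEStronglyMeasurable (fun t => g (ρ t)) (volume.restrict (Set.Ioc a x)) := by
      -- off `[a, b]` the function `g` is arbitrary, so it is replaced by its constant extension
      have hext : Continuous fun u => g (max a (min b u)) :=
        hgc.comp_continuous (by fun_prop) fun u =>
          ⟨le_max_left _ _, max_le hab.le (min_le_left _ _)⟩
      refine (hext.measurable.comp_aemeasurable hρm).aestronglyMeasurable.congr ?_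
      refine (ae_restrict_iff' measurableSet_Ioc).2 (Filter.Eventually.of_forall fun t ht => ?_)
      have h1 := (hρ t ⟨ht.1.le, ht.2⟩).1
      simp only [Function.comp]
      rw [min_eq_right h1.2, max_eq_right (hx.1.trans h1.1)]
    have hrgρ : IntervalIntegrable (fun t => (-r t) * g (ρ t)) volume a x := by
      rw [intervalIntegrable_iff_integrableOn_Ioc_of_le hx.1]
      refine Integrable.mul_bdd (c := C) hi1.1.neg hgm ?_
      refine (ae_restrict_iff' measurableSet_Ioc).2 (Filter.Eventually.of_forall fun t ht => ?_)
      have h1 := (hρ t ⟨ht.1.le, ht.2⟩).1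
      exact hC _ ⟨hx.1.trans h1.1, h1.2⟩
    rw [← integral_add_adjacent_intervals hrg1 hrg2,
      integral_comp_rho hx hi hl hr hzero hρ g hgc, ← integral_add hrg1 hrgρ]
    refine integral_congr_ae ?_
    filter_upwards [hl] with t ht h'
    rw [Set.uIoc_of_le hx.1] at h'
    rw [abs_of_neg (neg_pos.1 (ht h'))]
    ring
  have bound : ∀ g : ℝ → ℝ,
      (∀ u ∈ Set.Icc a b, ∀ v ∈ Set.Icc a b, |g u - g v| ≤ ω |u - v|) →
      |∫ t in a..b, r t * g t| ≤ ∫ t in a..x, |r t| * ω (ρ t - t) := by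
    intro g hg
    rw [split g hg, ← Real.norm_eq_abs]
    refine norm_integral_le_of_norm_le hx.1 (Filter.Eventually.of_forall fun t ht => ?_) hB
    have h1 := (hρ t ⟨ht.1.le, ht.2⟩).1
    have h2 := hg (ρ t) ⟨hx.1.trans h1.1, h1.2⟩ t ⟨ht.1.le, ht.2.trans hx.2⟩
    rw [abs_of_nonneg (show 0 ≤ ρ t - t by linarith [h1.1, ht.2])] at h2
    rw [Real.norm_eq_abs, abs_mul, abs_abs]
    exact mul_le_mul_of_nonneg_left h2 (abs_nonneg _)
  refine ⟨bound, fun hconc => ?_⟩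
  obtain ⟨g, hg, hgρ⟩ := exists_extremal hx hωc hωm hω0 hωsub hconc
    (fun t ht => (hρ t ht).1) hanti hsurj
  refine IsGreatest.csSup_eq ⟨⟨g, hg, ?_⟩, ?_⟩
  · have e : (∫ t in a..b, r t * g t) = ∫ t in a..x, |r t| * ω (ρ t - t) := by
      rw [split g hg]
      refine integral_congr_ae ?_
      filter_upwards [hx0] with t htx h'
      rw [Set.uIoc_of_le hx.1] at h'
      rw [hgρ t ⟨h'.1.le, lt_of_le_of_ne h'.2 htx⟩]
    rw [e, abs_of_nonneg]
    exact (abs_nonneg _).trans (bound g hg)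
  · rintro _ ⟨g', hg', rfl⟩
    exact bound g' hg'
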